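/- arXiv:2409.16963 — 3 statements merged into one kernel-verified Lean document; each statement's English description precedes it below -/
import Mathlib

section
/- Since sup_{x≥0} |(log β)'(x)| < ∞, for every initial configuration Y_0 = (y_1^0, …, y_n^0) in (ℝ^s)^n there exists a solution Y(t), defined for all t ≥ 0, of the gradient flow of the relative entropy with Y(0) = Y_0. -/
open Filter Topology

/-- The normalizing constant `Z = Σ_{k ≠ ℓ} β(|y_k - y_ℓ|²)`. -/
noncomputable def pairZ {E : Type*} [NormedAddCommGroup E] (β : ℝ → ℝ) {n : ℕ}
    (Y : Fin n → E) : ℝ :=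
  ∑ k : Fin n, ∑ l : Fin n, if k ≠ l then β (‖Y k - Y l‖ ^ 2) else 0

/-- The low-dimensional similarity `q_{ij}(Y) = β(|y_i - y_j|²) / Z(Y)`. -/
noncomputable def qfun {E : Type*} [NormedAddCommGroup E] (β : ℝ → ℝ) {n : ℕ}
    (Y : Fin n → E) (i j : Fin n) : ℝ :=
  β (‖Y i - Y j‖ ^ 2) / pairZ β Y

/-- The derivative `(log β)'` on `[0, ∞)`. -/
noncomputable def lbd (β : ℝ → ℝ) : ℝ → ℝ :=
  fun x => derivWithin (fun y => Real.log (β y)) (Set.Ici 0) x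

/-- `Y : ℝ → Fin n → E` is a solution of the gradient flow of the relative entropy:
`dy_i/dt = 4 Σ_{j ≠ i} (p_{ij} - q_{ij}(Y)) (y_i - y_j) (log β)'(|y_i - y_j|²)` for `t ≥ 0`. -/
def IsGradFlow {E : Type*} [NormedAddCommGroup E] [NormedSpace ℝ E] (β : ℝ → ℝ) {n : ℕ}
    (p : Fin n → Fin n → ℝ) (Y : ℝ → Fin n → E) : Prop :=
  ∀ i : Fin n, ∀ t ∈ Set.Ici (0 : ℝ),
    HasDerivWithinAt (fun u => Y u i)
      (∑ j ∈ Finset.univ.filter (· ≠ i),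
        (4 * (p i j - qfun β (Y t) i j) * lbd β (‖Y t i - Y t j‖ ^ 2)) • (Y t i - Y t j))
      (Set.Ici 0) t

/-- The diameter of the configuration `Y`, i.e. `max_{i,j} |y_i - y_j|`. -/
noncomputable def diamY {E : Type*} [NormedAddCommGroup E] {n : ℕ} (Y : Fin n → E) : ℝ :=
  Metric.diam (Set.range Y)

/-!
Since `0 ≤ q_{ij} ≤ 1` and `(log β)'` is bounded, the velocity field of the flow is bounded by a
multiple of the norm of the configuration. For a field with linear growth, the Picard–Lindelöf
theorem on the ball of radius `1 + ‖x‖` about `x` gives a lifetime that does not depend on `x`, so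
that local solutions can be continued for all times.

Each velocity is a linear combination of differences of the points, so a configuration never
leaves the linear span of its initial points. The flow in an arbitrary inner product space
therefore reduces to the flow in a finite-dimensional subspace, where a `C¹` field is Lipschitz on
balls.
-/

open scoped NNReal

section LinearGrowth

variable {V : Type*} [NormedAddCommGroup V] [NormedSpace ℝ V] {F : V → V}

lemma exists_isIntegralCurveOn_of_linear_growth [CompleteSpace V] {x : V} {C K : ℝ≥0}
    {ε : ℝ}
    (hF : LipschitzOnWith K F (Metric.closedBall x (1 + ‖x‖)))
    (hgrowth : ∀ y, ‖F y‖ ≤ C * (1 + ‖y‖)) (hε : 0 ≤ ε) (hCε : 2 * C * ε ≤ 1) :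
    ∃ γ : ℝ → V, γ 0 = x ∧ IsIntegralCurveOn γ (fun _ ↦ F) (Set.Icc (-ε) ε) := by
  have hbound : ∀ y ∈ Metric.closedBall x (1 + ‖x‖), ‖F y‖ ≤ 2 * C * (1 + ‖x‖) := by
    intro y hy
    have hyx : ‖y‖ ≤ ‖x‖ + (1 + ‖x‖) := by
      simpa using norm_le_of_mem_closedBall hy
    calc ‖F y‖ ≤ C * (1 + ‖y‖) := hgrowth y
      _ ≤ C * (2 * (1 + ‖x‖)) := by gcongr; linarith
      _ = 2 * C * (1 + ‖x‖) := by ring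
  have hlifetime : 2 * C * (1 + ‖x‖) * ε ≤ 1 + ‖x‖ := by
    have := mul_le_mul_of_nonneg_right hCε (by positivity : 0 ≤ 1 + ‖x‖)
    linarith
  have hPL : IsPicardLindelof (fun _ ↦ F) (tmin := -ε) (tmax := ε) ⟨0, by simpa using hε⟩ x
      (1 + ‖x‖₊) 0 (2 * C * (1 + ‖x‖₊)) K :=
    .of_time_independent (by simpa using hbound) (by simpa using hF) (by simpa using hlifetime)
  exact hPL.exists_eq_forall_mem_Icc_hasDerivWithinAt₀

theorem exists_isIntegralCurve_of_uniform_time [CompleteSpace V] (hF : ContDiff ℝ 1 F) {ε : ℝ}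
    (hε : 0 < ε)
    (hlocal : ∀ y, ∃ γ : ℝ → V, γ 0 = y ∧ IsIntegralCurveOn γ (fun _ ↦ F) (Set.Ioo (-ε) ε))
    (x : V) : ∃ γ : ℝ → V, γ 0 = x ∧ IsIntegralCurve γ (fun _ ↦ F) := by
  have hlocal' (y : V) : ∃ γ : ℝ → V, γ 0 = y ∧
      IsMIntegralCurveOn (I := modelWithCornersSelf ℝ V) γ F (Set.Ioo (-ε) ε) := by
    obtain ⟨γ, hγ₀, hγ⟩ := hlocal y
    exact ⟨γ, hγ₀, fun t ht ↦ (hγ t ht).hasFDerivWithinAt.hasMFDerivWithinAt⟩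
  obtain ⟨γ, hγ₀, hγ⟩ := exists_isMIntegralCurve_of_isMIntegralCurveOn
    (contMDiff_vectorSpace_iff_contDiff.2 hF) hε hlocal' x
  exact ⟨γ, hγ₀, fun t ↦ hasDerivAt_iff_hasFDerivAt.2 (hγ t).hasFDerivAt⟩

theorem exists_isIntegralCurve_of_linear_growth [FiniteDimensional ℝ V] (hF : ContDiff ℝ 1 F)
    {C : ℝ} (hgrowth : ∀ y, ‖F y‖ ≤ C * (1 + ‖y‖)) (x : V) :
    ∃ γ : ℝ → V, γ 0 = x ∧ IsIntegralCurve γ (fun _ ↦ F) := by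
  have : CompleteSpace V := FiniteDimensional.complete ℝ V
  have hC : 0 ≤ C := by simpa using (norm_nonneg _).trans (hgrowth 0)
  lift C to ℝ≥0 using hC
  set ε : ℝ := 1 / (2 * (C + 1)) with hε
  have hCε : 2 * C * ε ≤ 1 := by
    rw [hε, mul_one_div, div_le_one (by positivity)]
    linarith
  refine exists_isIntegralCurve_of_uniform_time hF (ε := ε) (by positivity) (fun y ↦ ?_) x
  obtain ⟨K, hK⟩ := hF.locallyLipschitz.locallyLipschitzOn.exists_lipschitzOnWith_of_compact
    (isCompact_closedBall y (1 + ‖y‖))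
  obtain ⟨γ, hγ₀, hγ⟩ := exists_isIntegralCurveOn_of_linear_growth hK hgrowth (by positivity) hCε
  exact ⟨γ, hγ₀, hγ.mono Set.Ioo_subset_Icc_self⟩

end LinearGrowth

section SimilarityBounds

variable {E : Type*} [NormedAddCommGroup E] {n : ℕ} {β : ℝ → ℝ} {Y : Fin n → E} {i j : Fin n}

lemma le_pairZ (hβnonneg : ∀ x, 0 ≤ x → 0 ≤ β x) (hij : i ≠ j) :
    β (‖Y i - Y j‖ ^ 2) ≤ pairZ β Y := by
  have hnonneg (k l : Fin n) : 0 ≤ if k ≠ l then β (‖Y k - Y l‖ ^ 2) else 0 := by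
    split_ifs
    exacts [hβnonneg _ (sq_nonneg _), le_rfl]
  calc β (‖Y i - Y j‖ ^ 2) = if i ≠ j then β (‖Y i - Y j‖ ^ 2) else 0 := (if_pos hij).symm
    _ ≤ ∑ l, if i ≠ l then β (‖Y i - Y l‖ ^ 2) else 0 :=
      Finset.single_le_sum (fun l _ ↦ hnonneg i l) (Finset.mem_univ j)
    _ ≤ pairZ β Y :=
      Finset.single_le_sum (f := fun k ↦ ∑ l, if k ≠ l then β (‖Y k - Y l‖ ^ 2) else 0)
        (fun k _ ↦ Finset.sum_nonneg fun l _ ↦ hnonneg k l) (Finset.mem_univ i)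

lemma pairZ_pos (hβpos : ∀ x, 0 ≤ x → 0 < β x) (hij : i ≠ j) : 0 < pairZ β Y :=
  (hβpos _ (sq_nonneg _)).trans_le (le_pairZ (fun x hx ↦ (hβpos x hx).le) hij)

lemma abs_qfun_le_one (hβnonneg : ∀ x, 0 ≤ x → 0 ≤ β x) (hij : i ≠ j) : |qfun β Y i j| ≤ 1 := by
  have hnum : 0 ≤ β (‖Y i - Y j‖ ^ 2) := hβnonneg _ (sq_nonneg _)
  have hle : β (‖Y i - Y j‖ ^ 2) ≤ pairZ β Y := le_pairZ hβnonneg hij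
  rw [qfun, abs_of_nonneg (div_nonneg hnum (hnum.trans hle))]
  exact div_le_one_of_le₀ hle (hnum.trans hle)

end SimilarityBounds

/-- The coefficient of `y_i - y_j` in the velocity of `y_i` under the gradient flow. -/
noncomputable def pairCoeff {E : Type*} [NormedAddCommGroup E] (β : ℝ → ℝ) {n : ℕ}
    (p : Fin n → Fin n → ℝ) (Y : Fin n → E) (i j : Fin n) : ℝ :=
  4 * (p i j - qfun β Y i j) * lbd β (‖Y i - Y j‖ ^ 2)

/-- The velocity field of the gradient flow of the relative entropy on configurations, i.e. the
right-hand side of the equation in `IsGradFlow`. -/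
noncomputable def flowField {E : Type*} [NormedAddCommGroup E] [NormedSpace ℝ E] (β : ℝ → ℝ)
    {n : ℕ} (p : Fin n → Fin n → ℝ) (Y : Fin n → E) (i : Fin n) : E :=
  ∑ j ∈ Finset.univ.filter (· ≠ i), pairCoeff β p Y i j • (Y i - Y j)

lemma isGradFlow_of_isIntegralCurve_flowField {E : Type*} [NormedAddCommGroup E] [NormedSpace ℝ E]
    {β : ℝ → ℝ} {n : ℕ} {p : Fin n → Fin n → ℝ} {Y : ℝ → Fin n → E}
    (hY : IsIntegralCurve Y fun _ ↦ flowField β p) : IsGradFlow β p Y :=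
  fun i t _ ↦ (hasDerivAt_pi.1 (hY t) i).hasDerivWithinAt

section Growth

variable {E : Type*} [NormedAddCommGroup E] {n : ℕ} {β : ℝ → ℝ} {p : Fin n → Fin n → ℝ} {M : ℝ}
  {Y : Fin n → E} {i j : Fin n}

lemma abs_pairCoeff_le (hβnonneg : ∀ x, 0 ≤ x → 0 ≤ β x) (hM : ∀ x, 0 ≤ x → |lbd β x| ≤ M)
    (hij : i ≠ j) : |pairCoeff β p Y i j| ≤ 4 * (‖p‖ + 1) * M := by
  have hp : |p i j| ≤ ‖p‖ := (norm_le_pi_norm (p i) j).trans (norm_le_pi_norm p i)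
  have hpq : |p i j - qfun β Y i j| ≤ ‖p‖ + 1 :=
    (abs_sub _ _).trans (add_le_add hp (abs_qfun_le_one hβnonneg hij))
  rw [pairCoeff, abs_mul, abs_mul, abs_of_pos (four_pos : (0 : ℝ) < 4)]
  gcongr
  exact hM _ (sq_nonneg _)

lemma norm_flowField_le [NormedSpace ℝ E] (hβnonneg : ∀ x, 0 ≤ x → 0 ≤ β x)
    (hM : ∀ x, 0 ≤ x → |lbd β x| ≤ M) :
    ‖flowField β p Y‖ ≤ 8 * n * (‖p‖ + 1) * M * ‖Y‖ := by
  have hM₀ : 0 ≤ M := (abs_nonneg _).trans (hM 0 le_rfl)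
  have hdiff (i j : Fin n) : ‖Y i - Y j‖ ≤ 2 * ‖Y‖ := by
    linarith [norm_sub_le (Y i) (Y j), norm_le_pi_norm Y i, norm_le_pi_norm Y j]
  refine (pi_norm_le_iff_of_nonneg (by positivity)).2 fun i ↦ ?_
  calc ‖flowField β p Y i‖
      ≤ ∑ j ∈ Finset.univ.filter (· ≠ i), 4 * (‖p‖ + 1) * M * (2 * ‖Y‖) := by
        refine norm_sum_le_of_le _ fun j hj ↦ ?_
        rw [norm_smul]
        gcongr
        exacts [abs_pairCoeff_le hβnonneg hM (Finset.mem_filter.1 hj).2.symm, hdiff i j]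
    _ ≤ ∑ _j : Fin n, 4 * (‖p‖ + 1) * M * (2 * ‖Y‖) :=
        Finset.sum_le_sum_of_subset_of_nonneg (Finset.filter_subset _ _)
          fun _ _ _ ↦ by positivity
    _ = 8 * n * (‖p‖ + 1) * M * ‖Y‖ := by
        rw [Finset.sum_const, Finset.card_univ, Fintype.card_fin, nsmul_eq_mul]
        ring

end Growth

lemma contDiffOn_lbd {β : ℝ → ℝ} {m k : WithTop ℕ∞} (hβne : ∀ x, 0 ≤ x → β x ≠ 0)
    (hmk : m + 1 ≤ k) (hβsmooth : ContDiffOn ℝ k β (Set.Ici 0)) :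
    ContDiffOn ℝ m (lbd β) (Set.Ici 0) :=
  (hβsmooth.log hβne).derivWithin (uniqueDiffOn_Ici 0) hmk

section Smoothness

variable {E : Type*} [NormedAddCommGroup E] [InnerProductSpace ℝ E] {n : ℕ} {β : ℝ → ℝ}
  {k : WithTop ℕ∞}

lemma contDiff_comp_norm_sub_sq {ι : Type*} [Fintype ι] {g : ℝ → ℝ}
    (hg : ContDiffOn ℝ k g (Set.Ici 0)) (i j : ι) :
    ContDiff ℝ k fun Y : ι → E ↦ g (‖Y i - Y j‖ ^ 2) :=
  hg.comp_contDiff (((contDiff_apply ℝ E i).sub (contDiff_apply ℝ E j)).norm_sq ℝ)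
    fun Y ↦ Set.mem_Ici.2 (sq_nonneg ‖Y i - Y j‖)

lemma contDiff_pairZ (hβsmooth : ContDiffOn ℝ k β (Set.Ici 0)) :
    ContDiff ℝ k fun Y : Fin n → E ↦ pairZ β Y := by
  refine ContDiff.sum fun i _ ↦ ContDiff.sum fun j _ ↦ ?_
  split_ifs
  exacts [contDiff_comp_norm_sub_sq hβsmooth i j, contDiff_const]

lemma contDiff_qfun (hβpos : ∀ x, 0 ≤ x → 0 < β x) (hβsmooth : ContDiffOn ℝ k β (Set.Ici 0))
    {i j : Fin n} (hij : i ≠ j) : ContDiff ℝ k fun Y : Fin n → E ↦ qfun β Y i j :=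
  (contDiff_comp_norm_sub_sq hβsmooth i j).div (contDiff_pairZ hβsmooth)
    fun _ ↦ (pairZ_pos hβpos hij).ne'

lemma contDiff_flowField (hβpos : ∀ x, 0 ≤ x → 0 < β x) {m : WithTop ℕ∞} (hmk : m + 1 ≤ k)
    (hβsmooth : ContDiffOn ℝ k β (Set.Ici 0)) (p : Fin n → Fin n → ℝ) :
    ContDiff ℝ m (flowField β p : (Fin n → E) → Fin n → E) := by
  refine contDiff_pi.2 fun i ↦ ContDiff.sum fun j hj ↦ ?_
  have hq : ContDiff ℝ m fun Y : Fin n → E ↦ qfun β Y i j :=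
    contDiff_qfun hβpos (hβsmooth.of_le (le_self_add.trans hmk)) (Finset.mem_filter.1 hj).2.symm
  have hlbd : ContDiff ℝ m fun Y : Fin n → E ↦ lbd β (‖Y i - Y j‖ ^ 2) :=
    contDiff_comp_norm_sub_sq
      (contDiffOn_lbd (fun x hx ↦ (hβpos x hx).ne') hmk hβsmooth) i j
  exact ((contDiff_const.mul (contDiff_const.sub hq)).mul hlbd).smul
    ((contDiff_apply ℝ E i).sub (contDiff_apply ℝ E j))

end Smoothness

section LinearIsometry

variable {E E' : Type*} [NormedAddCommGroup E] [NormedSpace ℝ E] [NormedAddCommGroup E']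
  [NormedSpace ℝ E'] {n : ℕ} {β : ℝ → ℝ} {p : Fin n → Fin n → ℝ}

lemma pairCoeff_comp_linearIsometry (L : E →ₗᵢ[ℝ] E') (Y : Fin n → E) :
    pairCoeff β p (L ∘ Y) = pairCoeff β p Y := by
  ext i j
  simp only [pairCoeff, qfun, pairZ, Function.comp_apply, ← map_sub, L.norm_map]

lemma flowField_comp_linearIsometry (L : E →ₗᵢ[ℝ] E') (Y : Fin n → E) :
    flowField β p (L ∘ Y) = L ∘ flowField β p Y := by
  ext i
  simp only [flowField, pairCoeff_comp_linearIsometry, Function.comp_apply, map_sum, map_smul,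
    map_sub]

lemma isIntegralCurve_flowField_comp_linearIsometry (L : E →ₗᵢ[ℝ] E') {Y : ℝ → Fin n → E}
    (hY : IsIntegralCurve Y fun _ ↦ flowField β p) :
    IsIntegralCurve (fun t ↦ L ∘ Y t) fun _ ↦ flowField β p := by
  intro t
  simp only [flowField_comp_linearIsometry]
  exact hasDerivAt_pi.2 fun i ↦ L.toContinuousLinearMap.hasFDerivAt.comp_hasDerivAt t
    (hasDerivAt_pi.1 (hY t) i)

end LinearIsometry

section Existence

variable {E : Type*} [NormedAddCommGroup E] [InnerProductSpace ℝ E] {n : ℕ} {β : ℝ → ℝ}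

theorem exists_isIntegralCurve_flowField_of_finiteDimensional [FiniteDimensional ℝ E]
    (p : Fin n → Fin n → ℝ) (hβpos : ∀ x, 0 ≤ x → 0 < β x)
    (hβsmooth : ContDiffOn ℝ 2 β (Set.Ici 0)) (hβbdd : ∃ M : ℝ, ∀ x, 0 ≤ x → |lbd β x| ≤ M)
    (Y₀ : Fin n → E) :
    ∃ Y : ℝ → Fin n → E, Y 0 = Y₀ ∧ IsIntegralCurve Y fun _ ↦ flowField β p := by
  obtain ⟨M, hM⟩ := hβbdd
  have hM₀ : 0 ≤ M := (abs_nonneg _).trans (hM 0 le_rfl)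
  have hgrowth (Y : Fin n → E) :
      ‖flowField β p Y‖ ≤ 8 * n * (‖p‖ + 1) * M * (1 + ‖Y‖) :=
    (norm_flowField_le (fun x hx ↦ (hβpos x hx).le) hM).trans (by gcongr; linarith)
  exact exists_isIntegralCurve_of_linear_growth
    (contDiff_flowField hβpos one_add_one_eq_two.le hβsmooth p) hgrowth Y₀

theorem global_existence_of_gradient_flow_general
    (p : Fin n → Fin n → ℝ) (hβpos : ∀ x, 0 ≤ x → 0 < β x)
    (hβsmooth : ContDiffOn ℝ 2 β (Set.Ici 0)) (hβbdd : ∃ M : ℝ, ∀ x, 0 ≤ x → |lbd β x| ≤ M)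
    (Y₀ : Fin n → E) :
    ∃ Y : ℝ → Fin n → E, Y 0 = Y₀ ∧ IsIntegralCurve Y fun _ ↦ flowField β p := by
  let W : Submodule ℝ E := Submodule.span ℝ (Set.range Y₀)
  have : FiniteDimensional ℝ W := .span_of_finite ℝ (Set.finite_range Y₀)
  let Y₀W : Fin n → W := fun i ↦ ⟨Y₀ i, Submodule.subset_span (Set.mem_range_self i)⟩
  obtain ⟨Y, hY₀, hY⟩ :=
    exists_isIntegralCurve_flowField_of_finiteDimensional p hβpos hβsmooth hβbdd Y₀W
  refine ⟨fun t ↦ W.subtypeₗᵢ ∘ Y t, ?_, isIntegralCurve_flowField_comp_linearIsometry _ hY⟩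
  ext1 i
  simp [hY₀, Y₀W]

end Existence

/-- **Section 1.2.** Since `(log β)'` is bounded, for every initial configuration `Y₀` there
exists a solution of the gradient flow of the relative entropy, defined for all `t ≥ 0`,
starting at `Y₀`. -/
theorem global_existence_of_gradient_flow
    (s n : ℕ) (hs : 1 ≤ s) (hn : s + 1 < n)
    (p : Fin n → Fin n → ℝ)
    (hsymm : ∀ i j, p i j = p j i)
    (hppos : ∀ i j, i ≠ j → 0 < p i j)
    (hpsum : (∑ i, ∑ j, if i ≠ j then p i j else (0 : ℝ)) = 1)
    (β : ℝ → ℝ)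
    (hβpos : ∀ x, 0 ≤ x → 0 < β x)
    (hβsmooth : ContDiffOn ℝ (⊤ : ℕ∞) β (Set.Ici 0))
    (hβanti : AntitoneOn β (Set.Ici 0))
    (hβbdd : ∃ M : ℝ, ∀ x, 0 ≤ x → |lbd β x| ≤ M)
    (Y₀ : Fin n → EuclideanSpace ℝ (Fin s)) :
    ∃ Y : ℝ → Fin n → EuclideanSpace ℝ (Fin s),
      Y 0 = Y₀ ∧ IsGradFlow β p Y := by
  obtain ⟨Y, hY₀, hY⟩ := global_existence_of_gradient_flow_general p hβpos
    (mod_cast contDiffOn_infty.1 hβsmooth 2) hβbdd Y₀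
  exact ⟨Y, hY₀, isGradFlow_of_isIntegralCurve_flowField hY⟩
end

section
/- For every integer s ≥ 1 there exists a constant η = η(s) > 0 such that for every integer n > s+1 and any n points y_1, …, y_n in ℝ^s, one has max_{i≠j} |y_i − y_j|² ≥ (1+η) · min_{k≠ℓ} |y_k − y_ℓ|². -/
open Filter Topology

/-!
More than `d + 1` points of a `d`-dimensional space are affinely dependent, so some nonzero weights
`w` of sum zero satisfy `∑ i, w i • p i = 0`, and expanding the square of this vector gives
`∑ i, ∑ j, w i * w j * dist (p i) (p j) ^ 2 = 0`. If all squared distances lie in `[m, M]`, replace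
them by the midpoint `(m + M) / 2`: the error of each off-diagonal term is at most
`(M - m) / 2 * |w i * w j|`, while the off-diagonal sum of `w i * w j` is `-∑ i, w i ^ 2`. For
`d + 2` points this leaves `(d + 2) * m ≤ d * M`.
-/

lemma mul_mul_le_midpoint_add {m M t : ℝ} (hm : m ≤ t) (hM : t ≤ M) (a b : ℝ) :
    a * b * t ≤ (m + M) / 2 * (a * b) + (M - m) / 4 * (a ^ 2 + b ^ 2) := by
  have hsub : 0 ≤ (t - m) * (a - b) ^ 2 := mul_nonneg (sub_nonneg.2 hm) (sq_nonneg _)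
  have hadd : 0 ≤ (M - t) * (a + b) ^ 2 := mul_nonneg (sub_nonneg.2 hM) (sq_nonneg _)
  linarith

section

variable {ι : Type*} [Fintype ι]

lemma sum_mul_mul_le_of_sum_eq_zero {A : ι → ι → ℝ} {m M : ℝ} (hdiag : ∀ i, A i i = 0)
    (hm : ∀ i j, i ≠ j → m ≤ A i j) (hM : ∀ i j, i ≠ j → A i j ≤ M)
    {w : ι → ℝ} (hw : ∑ i, w i = 0) :
    ∑ i, ∑ j, w i * w j * A i j ≤ (Fintype.card ι * ((M - m) / 2) - M) * ∑ i, w i ^ 2 := by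
  classical
  have hterm (i j : ι) : w i * w j * A i j ≤ (m + M) / 2 * (w i * w j) +
      (M - m) / 4 * (w i ^ 2 + w j ^ 2) - if i = j then M * w i ^ 2 else 0 := by
    split_ifs with hij
    · subst hij
      rw [hdiag]
      linarith
    · rw [sub_zero]
      exact mul_mul_le_midpoint_add (hm i j hij) (hM i j hij) _ _
  calc ∑ i, ∑ j, w i * w j * A i j
      ≤ ∑ i, ∑ j, ((m + M) / 2 * (w i * w j) + (M - m) / 4 * (w i ^ 2 + w j ^ 2) -
          if i = j then M * w i ^ 2 else 0) :=
        Finset.sum_le_sum fun i _ ↦ Finset.sum_le_sum fun j _ ↦ hterm i j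
    _ = (Fintype.card ι * ((M - m) / 2) - M) * ∑ i, w i ^ 2 := by
        simp only [Finset.sum_sub_distrib, Finset.sum_add_distrib, ← Finset.mul_sum, hw, mul_zero,
          Finset.sum_const_zero, Finset.sum_const, Finset.card_univ, nsmul_eq_mul,
          Finset.sum_ite_eq, Finset.mem_univ, if_true]
        ring

variable {E P : Type*} [NormedAddCommGroup E] [InnerProductSpace ℝ E] [MetricSpace P]
  [NormedAddTorsor E P]

lemma exists_sum_mul_mul_dist_sq_eq_zero {p : ι → P} (hp : ¬ AffineIndependent ℝ p) :
    ∃ w : ι → ℝ, w ≠ 0 ∧ ∑ i, w i = 0 ∧ ∑ i, ∑ j, w i * w j * dist (p i) (p j) ^ 2 = 0 := by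
  rw [affineIndependent_iff_of_fintype] at hp
  push Not at hp
  obtain ⟨w, hw, hvsub, k, hk⟩ := hp
  refine ⟨w, Function.ne_iff.2 ⟨k, hk⟩, hw, ?_⟩
  have hinner := EuclideanGeometry.inner_weightedVSub p hw p hw
  rw [hvsub, inner_zero_left] at hinner
  simp only [sq]
  linarith

lemma card_mul_le_of_not_affineIndependent {p : ι → P} (hp : ¬ AffineIndependent ℝ p) {m M : ℝ}
    (hm : ∀ i j, i ≠ j → m ≤ dist (p i) (p j) ^ 2)
    (hM : ∀ i j, i ≠ j → dist (p i) (p j) ^ 2 ≤ M) :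
    Fintype.card ι * m ≤ (Fintype.card ι - 2) * M := by
  obtain ⟨w, hw0, hw, hsum⟩ := exists_sum_mul_mul_dist_sq_eq_zero hp
  have hpos : 0 < ∑ i, w i ^ 2 := by
    obtain ⟨k, hk⟩ := Function.ne_iff.1 hw0
    exact Finset.sum_pos' (fun i _ ↦ sq_nonneg _) ⟨k, Finset.mem_univ k, sq_pos_of_ne_zero hk⟩
  have hle := sum_mul_mul_le_of_sum_eq_zero (A := fun i j ↦ dist (p i) (p j) ^ 2)
    (by simp) hm hM hw
  rw [hsum] at hle
  linarith [nonneg_of_mul_nonneg_left hle hpos]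

end

theorem max_ge_one_plus_eta_min_general {E P ι : Type*} [NormedAddCommGroup E]
    [InnerProductSpace ℝ E] [FiniteDimensional ℝ E] [MetricSpace P] [NormedAddTorsor E P]
    [Fintype ι] (hι : Module.finrank ℝ E + 1 < Fintype.card ι) (p : ι → P) :
    (Module.finrank ℝ E + 2) * (⨅ q : {q : ι × ι // q.1 ≠ q.2}, dist (p q.1.1) (p q.1.2) ^ 2)
      ≤ Module.finrank ℝ E * ⨆ q : {q : ι × ι // q.1 ≠ q.2}, dist (p q.1.1) (p q.1.2) ^ 2 := by
  obtain ⟨e⟩ : Nonempty (Fin (Module.finrank ℝ E + 2) ↪ ι) :=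
    Function.Embedding.nonempty_of_card_le (by rwa [Fintype.card_fin])
  have hdep : ¬ AffineIndependent ℝ (p ∘ e) := fun h ↦ by
    have hcard := h.card_le_finrank_succ
    have hspan := Submodule.finrank_le (vectorSpan ℝ (Set.range (p ∘ e)))
    rw [Fintype.card_fin] at hcard
    omega
  let f (q : {q : ι × ι // q.1 ≠ q.2}) : ℝ := dist (p q.1.1) (p q.1.2) ^ 2
  have hbound := card_mul_le_of_not_affineIndependent hdep
    (fun i j hij ↦ ciInf_le (f := f) (Set.finite_range f).bddBelow ⟨(e i, e j), e.injective.ne hij⟩)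
    (fun i j hij ↦ le_ciSup (f := f) (Set.finite_range f).bddAbove ⟨(e i, e j), e.injective.ne hij⟩)
  simpa using hbound

/-- **Claim (3.6).** For every `s ≥ 1` there is a universal constant `η = η(s) > 0` such that
for any `n > s + 1` points `y_1, …, y_n` in `ℝ^s`,
`max_{i ≠ j} |y_i - y_j|² ≥ (1 + η) min_{k ≠ ℓ} |y_k - y_ℓ|²`.
(This is a quantitative form of the fact that the equilateral dimension of `ℝ^s` is `s+1`.) -/
theorem max_ge_one_plus_eta_min
    (s : ℕ) (hs : 1 ≤ s) :
    ∃ η : ℝ, 0 < η ∧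
      ∀ n : ℕ, s + 1 < n → ∀ y : Fin n → EuclideanSpace ℝ (Fin s),
        (1 + η) * (⨅ q : {q : Fin n × Fin n // q.1 ≠ q.2}, ‖y q.1.1 - y q.1.2‖ ^ 2)
          ≤ ⨆ q : {q : Fin n × Fin n // q.1 ≠ q.2}, ‖y q.1.1 - y q.1.2‖ ^ 2 := by
  have hs0 : (0 : ℝ) < s := by exact_mod_cast hs
  refine ⟨2 / s, by positivity, fun n hn y ↦ ?_⟩
  rw [one_add_div hs0.ne', div_mul_eq_mul_div, div_le_iff₀' hs0]
  simpa [dist_eq_norm] using max_ge_one_plus_eta_min_general (by simpa using hn) y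
end

section
/- Let Y(t) be a solution of the gradient flow of the relative entropy and set S(t) = Σ_{i=1}^n |y_i(t)|². Then S is differentiable and dS/dt = 8 Σ_{i<j} (p_{ij} − q_{ij}(Y(t))) |y_i(t) − y_j(t)|² (log β)'(|y_i(t) − y_j(t)|²), where Σ_{i<j} denotes the sum over pairs with 1 ≤ i < j ≤ n. -/
open Filter Topology

/-!
Differentiating `|y_i|²` along the flow gives a double sum of terms `w_{ij} ⟨y_i, y_i - y_j⟩`. The
weights `w_{ij}` are symmetric, so the terms of `(i, j)` and `(j, i)` combine to
`w_{ij} |y_i - y_j|²`.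
-/

theorem qfun_comm {E : Type*} [NormedAddCommGroup E] (β : ℝ → ℝ) {n : ℕ} (Y : Fin n → E)
    (i j : Fin n) : qfun β Y i j = qfun β Y j i := by
  rw [qfun, qfun, norm_sub_rev]

section PairInteraction

variable {ι E : Type*} [Fintype ι] [LinearOrder ι] [NormedAddCommGroup E] [InnerProductSpace ℝ E]

theorem inner_sub_add_inner_sub_eq_norm_sub_sq (x y : E) :
    inner ℝ x (x - y) + inner ℝ y (y - x) = ‖x - y‖ ^ 2 := by
  rw [← neg_sub x y, inner_neg_right, ← sub_eq_add_neg, ← inner_sub_left,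
    real_inner_self_eq_norm_sq]

theorem sum_sum_ne_mul_inner_sub_eq_sum_sum_lt {w : ι → ι → ℝ} (hw : ∀ i j, w i j = w j i)
    (y : ι → E) :
    ∑ i, ∑ j with j ≠ i, w i j * inner ℝ (y i) (y i - y j) =
      ∑ i, ∑ j with i < j, w i j * ‖y i - y j‖ ^ 2 := by
  let : LocallyFiniteOrderTop ι := .ofIci ι (fun i => {j | i ≤ j}) (by simp)
  let : LocallyFiniteOrderBot ι := .ofIic ι (fun i => {j | j ≤ i}) (by simp)
  calc
    _ = ∑ i, ∑ j ∈ {i}ᶜ, w i j * inner ℝ (y i) (y i - y j) := by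
      simp only [Finset.filter_ne', Finset.compl_singleton]
    _ = ∑ i, ∑ j ∈ Finset.Ioi i,
          (w i j * inner ℝ (y i) (y i - y j) + w j i * inner ℝ (y j) (y j - y i)) :=
      (Finset.sum_sum_Ioi_add_eq_sum_sum_off_diag _).symm
    _ = _ := by
      simp only [Finset.filter_lt_eq_Ioi]
      refine Finset.sum_congr rfl fun i _ => Finset.sum_congr rfl fun j _ => ?_
      rw [hw j i, ← mul_add, inner_sub_add_inner_sub_eq_norm_sub_sq]

theorem derivative_of_S_general {c : ι → ι → ℝ} (hc : ∀ i j, c i j = c j i) (φ : ℝ → ℝ)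
    {Y : ℝ → ι → E} {T : Set ℝ} {t : ℝ}
    (hY : ∀ i, HasDerivWithinAt (fun u => Y u i)
      (∑ j with j ≠ i, (4 * c i j * φ (‖Y t i - Y t j‖ ^ 2)) • (Y t i - Y t j)) T t) :
    HasDerivWithinAt (fun u => ∑ i, ‖Y u i‖ ^ 2)
      (8 * ∑ i, ∑ j, if i < j then
          c i j * ‖Y t i - Y t j‖ ^ 2 * φ (‖Y t i - Y t j‖ ^ 2)
        else 0) T t := by
  let w i j := 4 * c i j * φ (‖Y t i - Y t j‖ ^ 2)
  have hw : ∀ i j, w i j = w j i := fun i j => by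
    simp only [w, hc i j, norm_sub_rev (Y t i)]
  refine (HasDerivWithinAt.fun_sum fun i _ => (hY i).norm_sq).congr_deriv ?_
  calc
    ∑ i, 2 * inner ℝ (Y t i) (∑ j with j ≠ i, w i j • (Y t i - Y t j))
      = 2 * ∑ i, ∑ j with j ≠ i, w i j * inner ℝ (Y t i) (Y t i - Y t j) := by
        simp only [← Finset.mul_sum, inner_sum, real_inner_smul_right]
    _ = 2 * ∑ i, ∑ j with i < j, w i j * ‖Y t i - Y t j‖ ^ 2 := by
        rw [sum_sum_ne_mul_inner_sub_eq_sum_sum_lt hw]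
    _ = _ := by
        simp only [← Finset.sum_filter, Finset.mul_sum, w]
        refine Finset.sum_congr rfl fun i _ => Finset.sum_congr rfl fun j _ => ?_
        ring

end PairInteraction

/-- **Section 3 (computation of dS/dt).** Along a solution of the gradient flow,
`S(t) = Σ_i |y_i(t)|²` is differentiable with
`dS/dt = 8 Σ_{i<j} (p_{ij} - q_{ij}) |y_i - y_j|² (log β)'(|y_i - y_j|²)`. -/
theorem derivative_of_S
    (s n : ℕ) (hs : 1 ≤ s) (hn : s + 1 < n)
    (p : Fin n → Fin n → ℝ)
    (hsymm : ∀ i j, p i j = p j i)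
    (hppos : ∀ i j, i ≠ j → 0 < p i j)
    (hpsum : (∑ i, ∑ j, if i ≠ j then p i j else (0 : ℝ)) = 1)
    (β : ℝ → ℝ)
    (hβpos : ∀ x, 0 ≤ x → 0 < β x)
    (hβsmooth : ContDiffOn ℝ (⊤ : ℕ∞) β (Set.Ici 0))
    (hβanti : AntitoneOn β (Set.Ici 0))
    (hβbdd : ∃ M : ℝ, ∀ x, 0 ≤ x → |lbd β x| ≤ M)
    (Y : ℝ → Fin n → EuclideanSpace ℝ (Fin s))
    (hflow : IsGradFlow β p Y) :
    ∀ t ∈ Set.Ici (0 : ℝ),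
      HasDerivWithinAt (fun u => ∑ i, ‖Y u i‖ ^ 2)
        (8 * ∑ i, ∑ j, if i < j then
            (p i j - qfun β (Y t) i j) * ‖Y t i - Y t j‖ ^ 2
              * lbd β (‖Y t i - Y t j‖ ^ 2)
          else 0)
        (Set.Ici 0) t := by
  intro t ht
  have hc : ∀ i j, p i j - qfun β (Y t) i j = p j i - qfun β (Y t) j i := fun i j => by
    rw [hsymm, qfun_comm]
  exact derivative_of_S_general hc (lbd β) fun i => hflow i t ht
end
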